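/- Let G be a cactus graph, let u and v be vertices of G, and let 𝔅 be the set of blocks of G. For each block B in 𝔅, let u_B and v_B denote the vertices of B closest (in G) to u and to v, respectively. Then dis_G(u,v) = Σ_{B ∈ 𝔅} dis_G(u_B, v_B). Moreover, an edge e lying in a block B is (u,v)-distance-disparate if and only if it is (u_B, v_B)-distance-disparate. -/

import Mathlib

open Finset

attribute [local instance] Classical.propDecidable

variable {V : Type*}

/-- `n_G(s,t)`: the number of vertices strictly closer to `s` than to `t`. -/
noncomputable def closerCount [Fintype V] (G : SimpleGraph V) (s t : V) : ℕ :=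
  (Finset.univ.filter fun w => G.dist w s < G.dist w t).card

/-- `o_G(s,t)`: the number of vertices equidistant from `s` and `t`. -/
noncomputable def equidistCount [Fintype V] (G : SimpleGraph V) (s t : V) : ℕ :=
  (Finset.univ.filter fun w => G.dist w s = G.dist w t).card

lemma equidistCount_comm [Fintype V] (G : SimpleGraph V) (s t : V) :
    equidistCount G s t = equidistCount G t s := by
  unfold equidistCount
  congr 1
  ext w
  simp only [Finset.mem_filter]
  exact and_congr_right fun _ => ⟨Eq.symm, Eq.symm⟩

/-- `o_G` as a function on unordered pairs (edges). -/
noncomputable def equidistSym2 [Fintype V] (G : SimpleGraph V) : Sym2 V → ℕ :=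
  Sym2.lift ⟨fun s t => equidistCount G s t, fun s t => equidistCount_comm G s t⟩

/-- The Wiener index: the sum of distances over unordered pairs of vertices. -/
noncomputable def wiener [Fintype V] (G : SimpleGraph V) : ℕ :=
  ∑ p : Sym2 V, Sym2.lift ⟨fun u v => G.dist u v, fun _ _ => G.dist_comm⟩ p

/-- The Szeged index `Sz(G) = Σ_{{s,t} ∈ E(G)} n_G(s,t) n_G(t,s)`. -/
noncomputable def szeged [Fintype V] (G : SimpleGraph V) : ℕ :=
  ∑ e ∈ G.edgeFinset,
    Sym2.lift ⟨fun s t => closerCount G s t * closerCount G t s,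
      fun _ _ => Nat.mul_comm _ _⟩ e

/-- The revised Szeged index
`Sz*(G) = Σ_{{s,t} ∈ E(G)} (n_G(s,t) + o_G(s,t)/2) (n_G(t,s) + o_G(t,s)/2)`. -/
noncomputable def revisedSzeged [Fintype V] (G : SimpleGraph V) : ℚ :=
  ∑ e ∈ G.edgeFinset,
    Sym2.lift ⟨fun s t =>
      ((closerCount G s t : ℚ) + (equidistCount G s t : ℚ) / 2) *
        ((closerCount G t s : ℚ) + (equidistCount G t s : ℚ) / 2),
      fun _ _ => mul_comm _ _⟩ e

/-- An edge `{s,t}` is `(u,v)`-distance-disparate if `d(u,s) < d(u,t)` and `d(v,s) > d(v,t)`,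
or `d(u,s) > d(u,t)` and `d(v,s) < d(v,t)`. -/
def IsDisparate (G : SimpleGraph V) (u v : V) : Sym2 V → Prop :=
  Sym2.lift ⟨fun s t =>
    (G.dist u s < G.dist u t ∧ G.dist v t < G.dist v s) ∨
      (G.dist u t < G.dist u s ∧ G.dist v s < G.dist v t),
    fun _ _ => propext or_comm⟩

/-- `dis_G(u,v)`: the number of `(u,v)`-distance-disparate edges of `G`. -/
noncomputable def disCount [Fintype V] (G : SimpleGraph V) (u v : V) : ℕ :=
  (G.edgeFinset.filter (IsDisparate G u v)).card

/-- An edge `{s,t}` is `(u,v)`-distance-equal if `d(u,s) = d(u,t)` and `d(v,s) = d(v,t)`. -/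
def IsDistEqual (G : SimpleGraph V) (u v : V) : Sym2 V → Prop :=
  Sym2.lift ⟨fun s t => G.dist u s = G.dist u t ∧ G.dist v s = G.dist v t,
    fun _ _ => propext ⟨fun h => ⟨h.1.symm, h.2.symm⟩, fun h => ⟨h.1.symm, h.2.symm⟩⟩⟩

/-- `deq_G(u,v)`: the number of `(u,v)`-distance-equal edges of `G`. -/
noncomputable def deqCount [Fintype V] (G : SimpleGraph V) (u v : V) : ℕ :=
  (G.edgeFinset.filter (IsDistEqual G u v)).card

/-- A subgraph without cut vertices: it is connected and deleting any single vertex leaves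
it preconnected. -/
def NoCutVertexSub (G : SimpleGraph V) (H : G.Subgraph) : Prop :=
  H.Connected ∧ ∀ v : V, ((H.deleteVerts {v}).coe.Preconnected)

/-- A block of `G`: a maximal connected subgraph without a cut vertex. -/
def IsBlock (G : SimpleGraph V) (B : G.Subgraph) : Prop :=
  NoCutVertexSub G B ∧ ∀ H : G.Subgraph, NoCutVertexSub G H → B ≤ H → B = H

/-- The subgraph `B` is a single edge together with its two endpoints. -/
def IsEdgeBlock (G : SimpleGraph V) (B : G.Subgraph) : Prop :=
  ∃ (u v : V) (h : G.Adj u v), B = G.subgraphOfAdj h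

/-- The subgraph `B` is a cycle (of some length `n ≥ 3`). -/
def IsCycleBlock (G : SimpleGraph V) (B : G.Subgraph) : Prop :=
  ∃ n : ℕ, 3 ≤ n ∧ Nonempty (B.coe ≃g SimpleGraph.cycleGraph n)

/-- A cactus graph: a connected graph in which every block is an edge or a cycle. -/
def IsCactus (G : SimpleGraph V) : Prop :=
  G.Connected ∧ ∀ B : G.Subgraph, IsBlock G B → IsEdgeBlock G B ∨ IsCycleBlock G B

/-- `x` and `y` are joined by a walk inside the subgraph `K`. -/
def LinkedIn (G : SimpleGraph V) (K : G.Subgraph) (x y : V) : Prop :=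
  ∃ p : G.Walk x y, p.toSubgraph ≤ K

lemma LinkedIn.symm {G : SimpleGraph V} {K : G.Subgraph} {x y : V}
    (h : LinkedIn G K x y) : LinkedIn G K y x := by
  obtain ⟨p, hp⟩ := h
  exact ⟨p.reverse, by rwa [SimpleGraph.Walk.toSubgraph_reverse]⟩

lemma LinkedIn.trans {G : SimpleGraph V} {K : G.Subgraph} {x y z : V}
    (h : LinkedIn G K x y) (h' : LinkedIn G K y z) : LinkedIn G K x z := by
  obtain ⟨p, hp⟩ := h
  obtain ⟨q, hq⟩ := h'
  exact ⟨p.append q, by rw [SimpleGraph.Walk.toSubgraph_append]; exact sup_le hp hq⟩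

lemma LinkedIn.mono {G : SimpleGraph V} {K L : G.Subgraph} {x y : V}
    (h : LinkedIn G K x y) (hKL : K ≤ L) : LinkedIn G L x y := by
  obtain ⟨p, hp⟩ := h
  exact ⟨p, hp.trans hKL⟩

lemma noCut_iff (G : SimpleGraph V) (H : G.Subgraph) :
    NoCutVertexSub G H ↔ H.verts.Nonempty ∧
      (∀ x ∈ H.verts, ∀ y ∈ H.verts, LinkedIn G H x y) ∧
      ∀ w, ∀ x ∈ H.verts, ∀ y ∈ H.verts, x ≠ w → y ≠ w →
        LinkedIn G (H.deleteVerts {w}) x y := by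
  unfold NoCutVertexSub
  rw [SimpleGraph.Subgraph.connected_iff,
    SimpleGraph.Subgraph.preconnected_iff_forall_exists_walk_subgraph]
  constructor
  · rintro ⟨⟨h1, h2⟩, h3⟩
    refine ⟨h2, fun x hx y hy => h1 hx hy, fun w x hx y hy hxw hyw => ?_⟩
    have := h3 w
    rw [← SimpleGraph.Subgraph.preconnected_iff,
      SimpleGraph.Subgraph.preconnected_iff_forall_exists_walk_subgraph] at this
    exact this ⟨hx, hxw⟩ ⟨hy, hyw⟩
  · rintro ⟨h1, h2, h3⟩
    refine ⟨⟨fun hx hy => h2 _ hx _ hy, h1⟩, fun w => ?_⟩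
    rw [← SimpleGraph.Subgraph.preconnected_iff,
      SimpleGraph.Subgraph.preconnected_iff_forall_exists_walk_subgraph]
    intro x y hx hy
    exact h3 w x hx.1 y hy.1 hx.2 hy.2

/-- Gluing: `K` attaches to `H` robustly. -/
lemma noCut_sup (G : SimpleGraph V) (H K : G.Subgraph) (hH : NoCutVertexSub G H)
    (h1 : ∀ x ∈ K.verts, ∃ h ∈ H.verts, LinkedIn G K x h)
    (h2 : ∀ w, ∀ x ∈ K.verts, x ≠ w →
      ∃ h ∈ H.verts, h ≠ w ∧ LinkedIn G (K.deleteVerts {w}) x h) :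
    NoCutVertexSub G (H ⊔ K) := by
  rw [noCut_iff] at hH ⊢
  obtain ⟨⟨a, ha⟩, hc, hd⟩ := hH
  refine ⟨⟨a, Or.inl ha⟩, ?_, ?_⟩
  · have key : ∀ x ∈ (H ⊔ K).verts, ∃ h ∈ H.verts, LinkedIn G (H ⊔ K) x h := by
      rintro x (hx | hx)
      · exact ⟨x, hx, (hc x hx x hx).mono le_sup_left⟩
      · obtain ⟨h, hh, hl⟩ := h1 x hx
        exact ⟨h, hh, hl.mono le_sup_right⟩
    intro x hx y hy
    obtain ⟨h, hh, hl⟩ := key x hx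
    obtain ⟨h', hh', hl'⟩ := key y hy
    exact (hl.trans ((hc h hh h' hh').mono le_sup_left)).trans hl'.symm
  · intro w
    have key : ∀ x ∈ (H ⊔ K).verts, x ≠ w →
        ∃ h ∈ H.verts, h ≠ w ∧ LinkedIn G ((H ⊔ K).deleteVerts {w}) x h := by
      rintro x (hx | hx) hxw
      · exact ⟨x, hx, hxw, (hd w x hx x hx hxw hxw).mono
          (SimpleGraph.Subgraph.deleteVerts_mono le_sup_left)⟩
      · obtain ⟨h, hh, hw, hl⟩ := h2 w x hx hxw
        exact ⟨h, hh, hw, hl.mono (SimpleGraph.Subgraph.deleteVerts_mono le_sup_right)⟩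
    intro x hx y hy hxw hyw
    obtain ⟨h, hh, hw, hl⟩ := key x hx hxw
    obtain ⟨h', hh', hw', hl'⟩ := key y hy hyw
    exact (hl.trans ((hd w h hh h' hh' hw hw').mono
      (SimpleGraph.Subgraph.deleteVerts_mono le_sup_left))).trans hl'.symm

lemma le_deleteVerts_of_notMem {G : SimpleGraph V} {K L : G.Subgraph} {w : V}
    (h : L ≤ K) (hw : w ∉ L.verts) : L ≤ K.deleteVerts {w} := by
  have hne : ∀ x ∈ L.verts, x ∉ ({w} : Set V) := by
    rintro x hx rfl
    exact hw hx
  refine ⟨fun x hx => ⟨h.1 hx, hne x hx⟩, fun x y hxy => ?_⟩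
  rw [SimpleGraph.Subgraph.deleteVerts_adj]
  exact ⟨h.1 hxy.fst_mem, hne _ hxy.fst_mem, h.1 hxy.snd_mem, hne _ hxy.snd_mem, h.2 hxy⟩

lemma noCut_ear (G : SimpleGraph V) (H : G.Subgraph) (hH : NoCutVertexSub G H) {a b : V}
    (ha : a ∈ H.verts) (hb : b ∈ H.verts) (p : G.Walk a b) (hp : p.IsPath) :
    NoCutVertexSub G (H ⊔ p.toSubgraph) := by
  have htake : ∀ x (hx : x ∈ p.support), (p.takeUntil x hx).toSubgraph ≤ p.toSubgraph := by
    intro x hx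
    conv_rhs => rw [← p.take_spec hx, SimpleGraph.Walk.toSubgraph_append]
    exact le_sup_left
  have hdrop : ∀ x (hx : x ∈ p.support), (p.dropUntil x hx).toSubgraph ≤ p.toSubgraph := by
    intro x hx
    conv_rhs => rw [← p.take_spec hx, SimpleGraph.Walk.toSubgraph_append]
    exact le_sup_right
  apply noCut_sup G H _ hH
  · intro x hx
    rw [SimpleGraph.Walk.mem_verts_toSubgraph] at hx
    exact ⟨a, ha, LinkedIn.symm ⟨p.takeUntil x hx, htake x hx⟩⟩
  · intro w x hx hxw
    rw [SimpleGraph.Walk.mem_verts_toSubgraph] at hx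
    by_cases hw : w ∈ (p.takeUntil x hx).support
    · have hw' : w ∉ (p.dropUntil x hx).support := by
        intro hw'
        have hp' := hp
        rw [← p.take_spec hx, SimpleGraph.Walk.isPath_def,
          SimpleGraph.Walk.support_append] at hp'
        have hdis := List.disjoint_of_nodup_append hp'
        rw [SimpleGraph.Walk.mem_support_iff] at hw'
        rcases hw' with h | h
        · exact hxw h.symm
        · exact hdis hw h
      refine ⟨b, hb, ?_, p.dropUntil x hx, le_deleteVerts_of_notMem (hdrop x hx) ?_⟩
      · rintro rfl
        exact hw' (SimpleGraph.Walk.end_mem_support _)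
      · rwa [SimpleGraph.Walk.mem_verts_toSubgraph]
    · refine ⟨a, ha, ?_, LinkedIn.symm
        ⟨p.takeUntil x hx, le_deleteVerts_of_notMem (htake x hx) ?_⟩⟩
      · rintro rfl
        exact hw (SimpleGraph.Walk.start_mem_support _)
      · rwa [SimpleGraph.Walk.mem_verts_toSubgraph]

lemma path_le_block {G : SimpleGraph V} {B : G.Subgraph} (hB : IsBlock G B) {a b : V}
    (ha : a ∈ B.verts) (hb : b ∈ B.verts) (p : G.Walk a b) (hp : p.IsPath) :
    p.toSubgraph ≤ B := by
  have := hB.2 _ (noCut_ear G B hB.1 ha hb p hp) le_sup_left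
  rw [this]
  exact le_sup_right

/-- Two blocks sharing two vertices are equal. -/
lemma block_eq {G : SimpleGraph V} {B C : G.Subgraph} (hB : IsBlock G B) (hC : IsBlock G C)
    {a b : V} (hab : a ≠ b) (haB : a ∈ B.verts) (hbB : b ∈ B.verts)
    (haC : a ∈ C.verts) (hbC : b ∈ C.verts) : B = C := by
  have hsup : NoCutVertexSub G (B ⊔ C) := by
    have hC' := (noCut_iff G C).1 hC.1
    apply noCut_sup G B C hB.1
    · intro x hx
      exact ⟨a, haB, hC'.2.1 x hx a haC⟩
    · intro w x hx hxw
      by_cases haw : a = w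
      · have hbw : b ≠ w := fun h => hab (haw.trans h.symm)
        exact ⟨b, hbB, hbw, hC'.2.2 w x hx b hbC hxw hbw⟩
      · exact ⟨a, haB, haw, hC'.2.2 w x hx a haC hxw haw⟩
  exact (hB.2 _ hsup le_sup_left).trans (hC.2 _ hsup le_sup_right).symm

/-- A shortest walk to the nearest vertex `g` of `B` meets `B` only in `g`. -/
lemma shortest_meets {G : SimpleGraph V} {B : G.Subgraph} {u g : V}
    (hmin : ∀ x ∈ B.verts, G.dist u g ≤ G.dist u x) (r : G.Walk u g)
    (hr : r.length = G.dist u g) {z : V} (hz : z ∈ r.support) (hzB : z ∈ B.verts) : z = g := by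
  by_contra hne
  have h1 := SimpleGraph.Walk.length_takeUntil_lt_length hz hne
  have h2 := SimpleGraph.dist_le (r.takeUntil z hz)
  have h3 := hmin z hzB
  omega

/-- Every walk from `u` into the block `B` passes through the nearest vertex. -/
lemma gate_mem {G : SimpleGraph V} (hG : G.Connected) {B : G.Subgraph} (hB : IsBlock G B)
    {u g : V} (hg : g ∈ B.verts) (hmin : ∀ x ∈ B.verts, G.dist u g ≤ G.dist u x)
    {x : V} (hx : x ∈ B.verts) (q : G.Walk u x) : g ∈ q.support := by
  by_contra hgq
  have hxg : g ≠ x := by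
    rintro rfl
    exact hgq q.end_mem_support
  obtain ⟨r, hr⟩ := hG.exists_walk_length_eq_dist u g
  have hle := path_le_block hB hg hx (r.reverse.append q).bypass
    (SimpleGraph.Walk.bypass_isPath _)
  have hadj := (r.reverse.append q).bypass.toSubgraph_adj_snd
    (SimpleGraph.Walk.not_nil_of_ne hxg)
  set z := (r.reverse.append q).bypass.snd
  have hzB : z ∈ B.verts := (hle.2 hadj).snd_mem
  have hadj' := SimpleGraph.Walk.toSubgraph_bypass_le_toSubgraph.2 hadj
  rw [SimpleGraph.Walk.toSubgraph_append, SimpleGraph.Walk.toSubgraph_reverse,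
    SimpleGraph.Subgraph.sup_adj] at hadj'
  rcases hadj' with h | h
  · have hz := shortest_meets hmin r hr ((r.mem_verts_toSubgraph).1 h.snd_mem) hzB
    exact hadj.ne hz.symm
  · exact hgq ((q.mem_verts_toSubgraph).1 h.fst_mem)

lemma gate_dist {G : SimpleGraph V} (hG : G.Connected) {B : G.Subgraph} (hB : IsBlock G B)
    {u g : V} (hg : g ∈ B.verts) (hmin : ∀ x ∈ B.verts, G.dist u g ≤ G.dist u x)
    {x : V} (hx : x ∈ B.verts) : G.dist u x = G.dist u g + G.dist g x := by
  apply le_antisymm hG.dist_triangle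
  obtain ⟨q, hq⟩ := hG.exists_walk_length_eq_dist u x
  have hmem := gate_mem hG hB hg hmin hx q
  have h1 := congrArg SimpleGraph.Walk.length (q.take_spec hmem)
  rw [SimpleGraph.Walk.length_append] at h1
  have h2 := SimpleGraph.dist_le (q.takeUntil g hmem)
  have h3 := SimpleGraph.dist_le (q.dropUntil g hmem)
  omega

lemma gate_exists {G : SimpleGraph V} {B : G.Subgraph} (hB : IsBlock G B) (u : V) :
    ∃ g ∈ B.verts, ∀ x ∈ B.verts, G.dist u g ≤ G.dist u x := by
  have hne := ((noCut_iff G B).1 hB.1).1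
  obtain ⟨g, hg, hm⟩ := WellFounded.has_min (measure (fun x => G.dist u x)).wf B.verts hne
  exact ⟨g, hg, fun x hx => not_lt.1 (hm x hx)⟩

/-- If `p,q` lie in a block `B` different from `C` they have the same projection to `C`. -/
lemma gate_mem_block {G : SimpleGraph V} (hG : G.Connected) {B C : G.Subgraph}
    (hB : IsBlock G B) (hC : IsBlock G C)
    {p q g h : V} (hp : p ∈ B.verts) (hq : q ∈ B.verts)
    (hg : g ∈ C.verts) (hgm : ∀ x ∈ C.verts, G.dist p g ≤ G.dist p x)
    (hh : h ∈ C.verts) (hhm : ∀ x ∈ C.verts, G.dist q h ≤ G.dist q x) (hgh : g ≠ h) :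
    g ∈ B.verts := by
  obtain ⟨w, hw⟩ := ((noCut_iff G B).1 hB.1).2.1 p hp q hq
  obtain ⟨r, hr⟩ := hG.exists_walk_length_eq_dist q h
  have hm := gate_mem hG hC hg hgm hh (w.append r)
  rw [SimpleGraph.Walk.mem_support_append_iff] at hm
  rcases hm with hm | hm
  · exact hw.1 ((w.mem_verts_toSubgraph).2 hm)
  · exact absurd (shortest_meets hhm r hr hm hg) hgh

lemma not_disparate_other {G : SimpleGraph V} (hG : G.Connected) {B C : G.Subgraph}
    (hB : IsBlock G B) (hC : IsBlock G C) (hBC : B ≠ C) {p q : V}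
    (hp : p ∈ B.verts) (hq : q ∈ B.verts) (e : Sym2 V) (he : e ∈ C.edgeSet) :
    ¬ IsDisparate G p q e := by
  obtain ⟨g, hg, hgm⟩ := gate_exists hC p
  obtain ⟨h, hh, hhm⟩ := gate_exists hC q
  have hgh : g = h := by
    by_contra hne
    have h1 := gate_mem_block hG hB hC hp hq hg hgm hh hhm hne
    have h2 := gate_mem_block hG hB hC hq hp hh hhm hg hgm (Ne.symm hne)
    exact hBC (block_eq hB hC hne h1 h2 hg hh)
  subst hgh
  induction e using Sym2.ind with
  | _ s t =>
    rw [SimpleGraph.Subgraph.mem_edgeSet] at he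
    have a1 := gate_dist hG hC hg hgm he.fst_mem
    have a2 := gate_dist hG hC hg hgm he.snd_mem
    have a3 := gate_dist hG hC hh hhm he.fst_mem
    have a4 := gate_dist hG hC hh hhm he.snd_mem
    simp only [IsDisparate, Sym2.lift_mk]
    omega

lemma disparate_iff_gate {G : SimpleGraph V} (hG : G.Connected) {B : G.Subgraph}
    (hB : IsBlock G B) {u v g h : V}
    (hg : g ∈ B.verts) (hgm : ∀ x ∈ B.verts, G.dist u g ≤ G.dist u x)
    (hh : h ∈ B.verts) (hhm : ∀ x ∈ B.verts, G.dist v h ≤ G.dist v x)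
    (e : Sym2 V) (he : e ∈ B.edgeSet) :
    IsDisparate G u v e ↔ IsDisparate G g h e := by
  induction e using Sym2.ind with
  | _ s t =>
    rw [SimpleGraph.Subgraph.mem_edgeSet] at he
    have a1 := gate_dist hG hB hg hgm he.fst_mem
    have a2 := gate_dist hG hB hg hgm he.snd_mem
    have a3 := gate_dist hG hB hh hhm he.fst_mem
    have a4 := gate_dist hG hB hh hhm he.snd_mem
    simp only [IsDisparate, Sym2.lift_mk]
    omega

lemma noCut_edge (G : SimpleGraph V) {s t : V} (h : G.Adj s t) :
    NoCutVertexSub G (G.subgraphOfAdj h) := by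
  have hl : LinkedIn G (G.subgraphOfAdj h) s t :=
    ⟨h.toWalk, by rw [SimpleGraph.Adj.toSubgraph_toWalk]⟩
  have hrefl : ∀ (K : G.Subgraph) (x : V), x ∈ K.verts → LinkedIn G K x x := by
    intro K x hx
    exact ⟨SimpleGraph.Walk.nil, by simpa using hx⟩
  rw [noCut_iff]
  refine ⟨⟨s, by simp⟩, ?_, ?_⟩
  · intro x hx y hy
    have hx' := hx
    have hy' := hy
    simp only [SimpleGraph.subgraphOfAdj_verts, Set.mem_insert_iff,
      Set.mem_singleton_iff] at hx' hy'
    rcases hx' with rfl | rfl <;> rcases hy' with rfl | rfl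
    · exact hrefl _ _ hx
    · exact hl
    · exact hl.symm
    · exact hrefl _ _ hx
  · intro w x hx y hy hxw hyw
    by_cases hxy : x = y
    · subst hxy
      exact hrefl _ _ ⟨hx, hxw⟩
    · have hw : w ∉ (G.subgraphOfAdj h).verts := by
        simp only [SimpleGraph.subgraphOfAdj_verts, Set.mem_insert_iff,
          Set.mem_singleton_iff] at hx hy ⊢
        grind
      have hle := le_deleteVerts_of_notMem (le_refl (G.subgraphOfAdj h)) hw
      simp only [SimpleGraph.subgraphOfAdj_verts, Set.mem_insert_iff,
        Set.mem_singleton_iff] at hx hy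
      rcases hx with rfl | rfl <;> rcases hy with rfl | rfl
      · exact absurd rfl hxy
      · exact hl.mono hle
      · exact hl.symm.mono hle
      · exact absurd rfl hxy

lemma exists_block [Fintype V] (G : SimpleGraph V) (e : Sym2 V) (he : e ∈ G.edgeSet) :
    ∃ B : G.Subgraph, IsBlock G B ∧ e ∈ B.edgeSet := by
  induction e using Sym2.ind with
  | _ s t =>
    rw [SimpleGraph.mem_edgeSet] at he
    obtain ⟨B, hle, hmax⟩ := Finite.exists_le_maximal (noCut_edge G he)
    refine ⟨B, ⟨hmax.1, fun H hH hBH => le_antisymm hBH (hmax.2 hH hBH)⟩, ?_⟩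
    rw [SimpleGraph.Subgraph.mem_edgeSet]
    exact hle.2 (by simp)

lemma block_unique {G : SimpleGraph V} {B C : G.Subgraph} (hB : IsBlock G B)
    (hC : IsBlock G C) (e : Sym2 V) (heB : e ∈ B.edgeSet) (heC : e ∈ C.edgeSet) : B = C := by
  induction e using Sym2.ind with
  | _ s t =>
    rw [SimpleGraph.Subgraph.mem_edgeSet] at heB heC
    exact block_eq hB hC heB.ne heB.fst_mem heB.snd_mem heC.fst_mem heC.snd_mem

/-- **Lemma (disparate edges split over the blocks of a cactus).**
For vertices `u, v` of a cactus graph `G` with set of blocks `𝔅`, where `uB B` and `vB B`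
denote the vertices of the block `B` closest in `G` to `u` and to `v` respectively,
`dis_G(u,v) = Σ_{B ∈ 𝔅} dis_G(u_B, v_B)`; moreover an edge `e` of a block `B` is
`(u,v)`-distance-disparate iff it is `(u_B, v_B)`-distance-disparate. -/
theorem disCount_eq_sum_blocks [Fintype V] (G : SimpleGraph V) (hG : IsCactus G) (u v : V)
    (𝔅 : Finset G.Subgraph) (h𝔅 : ∀ B : G.Subgraph, B ∈ 𝔅 ↔ IsBlock G B)
    (uB vB : G.Subgraph → V)
    (huB : ∀ B ∈ 𝔅, uB B ∈ B.verts ∧ ∀ x ∈ B.verts, G.dist u (uB B) ≤ G.dist u x)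
    (hvB : ∀ B ∈ 𝔅, vB B ∈ B.verts ∧ ∀ x ∈ B.verts, G.dist v (vB B) ≤ G.dist v x) :
    (disCount G u v = ∑ B ∈ 𝔅, disCount G (uB B) (vB B)) ∧
      (∀ B ∈ 𝔅, ∀ e ∈ B.edgeSet,
        (IsDisparate G u v e ↔ IsDisparate G (uB B) (vB B) e)) := by
  have hmoreover : ∀ B ∈ 𝔅, ∀ e ∈ B.edgeSet,
      (IsDisparate G u v e ↔ IsDisparate G (uB B) (vB B) e) := by
    intro B hB e he
    exact disparate_iff_gate hG.1 ((h𝔅 B).1 hB) (huB B hB).1 (huB B hB).2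
      (hvB B hB).1 (hvB B hB).2 e he
  refine ⟨?_, hmoreover⟩
  unfold disCount
  rw [← Finset.card_biUnion]
  · congr 1
    ext e
    simp only [Finset.mem_filter, Finset.mem_biUnion, SimpleGraph.mem_edgeFinset]
    constructor
    · rintro ⟨he, hd⟩
      obtain ⟨B, hB, heB⟩ := exists_block G e he
      have hB' := (h𝔅 B).2 hB
      exact ⟨B, hB', he, (hmoreover B hB' e heB).1 hd⟩
    · rintro ⟨B, hB', he, hd⟩
      obtain ⟨C, hC, heC⟩ := exists_block G e he
      by_cases hBC : B = C
      · subst hBC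
        exact ⟨he, (hmoreover B hB' e heC).2 hd⟩
      · exact absurd hd (not_disparate_other hG.1 ((h𝔅 B).1 hB') hC hBC
          (huB B hB').1 (hvB B hB').1 e heC)
  · intro B hB C hC hBC
    rw [Finset.mem_coe] at hB hC
    rw [Function.onFun, Finset.disjoint_left]
    intro e he he'
    simp only [Finset.mem_filter, SimpleGraph.mem_edgeFinset] at he he'
    obtain ⟨D, hD, heD⟩ := exists_block G e he.1
    have h1 : B = D := by
      by_contra hne
      exact not_disparate_other hG.1 ((h𝔅 B).1 hB) hD hne
        (huB B hB).1 (hvB B hB).1 e heD he.2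
    have h2 : C = D := by
      by_contra hne
      exact not_disparate_other hG.1 ((h𝔅 C).1 hC) hD hne
        (huB C hC).1 (hvB C hC).1 e heD he'.2
    exact hBC (h1.trans h2.symm)
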